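/- Let T: X ⇉ X* be monotone and uniformly monotone with modulus ω (increasing, vanishing only at 0), and let vᵏ ∈ T(x^{k+1}), x^{k+1} = xᵏ − ∇φ*(vᵏ). Then Σ_{k=0}^∞ ω(‖x^{k+2} − x^{k+1}‖₂) ≤ Σ_{k=0}^∞ ⟨x^{k+2} − x^{k+1}, v^{k+1} − vᵏ⟩ ≤ D_{φ*}(v⁰, 0) < ∞; in particular ‖x^{k+1} − xᵏ‖₂ → 0 and vᵏ = ∇φ(xᵏ − x^{k+1}) → 0. -/

import Mathlib

open scoped RealInnerProductSpace
open Filter Topology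

/-!
Since `gφ` is the gradient of a convex function it is monotone, hence so is its inverse `gφs`;
a function with monotone gradient lies above its tangents (mean value theorem along a segment), so
the Bregman distances of `φs` are nonnegative. Because `gφs (v (k+1)) = x (k+1) - x (k+2)`, this
says that `φs (v k) - φs (v (k+1))` dominates `⟪x (k+2) - x (k+1), v (k+1) - v k⟫`; telescoping, and
`φs ≥ φs 0` (as `gφs 0 = 0`), bounds the partial sums. Summability of `ω ‖x (k+2) - x (k+1)‖` and
positivity of `ω` away from `0` force the increments to vanish.

For the dual iterates `v k = gφ (x k - x (k+1))`, continuity of `gφ` at `0` is required. In infinite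
dimension it comes from Fréchet differentiability of the convex `φ` at `0`
(`tendsto_gradient_zero`).
-/

section Helpers

variable {X : Type*} [NormedAddCommGroup X] [InnerProductSpace ℝ X] [CompleteSpace X]

lemma hasDerivAt_along_line {f : X → ℝ} {g : X → X} (hg : ∀ x, HasGradientAt f (g x) x)
    (b d : X) (t : ℝ) :
    HasDerivAt (fun s : ℝ => f (b + s • d)) ⟪g (b + t • d), d⟫ t := by
  have h1 : HasDerivAt (fun s : ℝ => b + s • d) d t := by
    simpa using ((hasDerivAt_id t).smul_const d).const_add b
  have h2 := (hg (b + t • d)).hasFDerivAt.comp_hasDerivAt t h1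
  rw [InnerProductSpace.toDual_apply_apply] at h2
  exact h2

lemma tangent_le_of_monotone_gradient {f : X → ℝ} {g : X → X}
    (hg : ∀ x, HasGradientAt f (g x) x) (hm : ∀ a b, 0 ≤ ⟪g a - g b, a - b⟫) (a b : X) :
    f b + ⟪g b, a - b⟫ ≤ f a := by
  have hd := hasDerivAt_along_line hg b (a - b)
  obtain ⟨c, hc, hceq⟩ := exists_hasDerivAt_eq_slope (fun s : ℝ => f (b + s • (a - b))) _
    (zero_lt_one' ℝ) (fun t _ => (hd t).continuousAt.continuousWithinAt) (fun t _ => hd t)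
  have h := hm (b + c • (a - b)) b
  rw [add_sub_cancel_left, real_inner_smul_right, inner_sub_left] at h
  have h' := nonneg_of_mul_nonneg_right h hc.1
  simp at hceq
  linarith

lemma tangent_le_of_convexOn {f : X → ℝ} {g : X → X} (hf : ConvexOn ℝ Set.univ f)
    (hg : ∀ x, HasGradientAt f (g x) x) (a b : X) :
    f b + ⟪g b, a - b⟫ ≤ f a := by
  have hd := hasDerivAt_along_line hg b (a - b) 0
  have hc : ConvexOn ℝ Set.univ (fun s : ℝ => f (b + s • (a - b))) := by
    have := hf.comp_affineMap (AffineMap.lineMap b a : ℝ →ᵃ[ℝ] X)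
    simpa [Function.comp_def, AffineMap.lineMap_apply, add_comm] using this
  have := hc.le_slope_of_hasDerivAt (Set.mem_univ 0) (Set.mem_univ 1) zero_lt_one hd
  simp [slope] at this
  linarith

/-- Norm continuity at a minimizer of the gradient of a convex Fréchet differentiable function,
valid in any Hilbert space. -/
lemma tendsto_gradient_zero {f : X → ℝ} {g : X → X} (hf : ConvexOn ℝ Set.univ f)
    (hg : ∀ x, HasGradientAt f (g x) x) (h0 : g 0 = 0) : Tendsto g (𝓝 0) (𝓝 0) := by
  rw [Metric.tendsto_nhds_nhds]
  intro ε hε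
  have hlit := (hasFDerivAt_iff_isLittleO_nhds_zero.1 (hg 0).hasFDerivAt).def
    (show (0 : ℝ) < ε / 4 by positivity)
  obtain ⟨δ, hδ, hball⟩ := Metric.eventually_nhds_iff.1 hlit
  refine ⟨δ / 2, by positivity, fun {x} hx => ?_⟩
  rw [dist_zero_right] at hx ⊢
  by_cases hgx : g x = 0
  · simpa [hgx] using hε
  have hx0 : 0 < ‖x‖ := norm_pos_iff.2 (by rintro rfl; exact hgx h0)
  have hgn : 0 < ‖g x‖ := norm_pos_iff.2 hgx
  -- Test the tangent inequality at `x` with a step of length `‖x‖` in the direction of `g x`.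
  set d : X := (‖x‖ / ‖g x‖) • g x with hd
  have hdn : ‖d‖ = ‖x‖ := by
    rw [hd, norm_smul, Real.norm_of_nonneg (by positivity)]; field_simp
  have hxd : ‖x + d‖ ≤ 2 * ‖x‖ := by
    have := norm_add_le x d
    linarith
  have h1 := hball (y := x + d) (by rw [dist_zero_right]; linarith)
  simp [h0] at h1
  have h2 := tangent_le_of_convexOn hf hg (x + d) x
  have h3 := tangent_le_of_convexOn hf hg x 0
  rw [h0, inner_zero_left] at h3
  have h4 : ⟪g x, x + d - x⟫ = ‖x‖ * ‖g x‖ := by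
    rw [add_sub_cancel_left, hd, real_inner_smul_right, real_inner_self_eq_norm_sq]; field_simp
  have h5 := (abs_le.1 h1).2
  have h6 : ‖x‖ * ‖g x‖ ≤ ‖x‖ * (ε / 2) := by
    nlinarith
  have := le_of_mul_le_mul_left h6 hx0
  linarith

end Helpers

/-- For a uniformly monotone `T`, the increments of the anisotropic proximal point
algorithm are summable through the modulus `ω`, and both the primal increments and
the dual iterates vanish in the limit. -/
theorem stmt13 {X : Type*} [NormedAddCommGroup X] [InnerProductSpace ℝ X] [CompleteSpace X]
    (φ φs : X → ℝ) (gφ gφs : X → X)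
    (hconv : StrictConvexOn ℝ Set.univ φ)
    (hgrad : ∀ x, HasGradientAt φ (gφ x) x)
    (hgrads : ∀ x, HasGradientAt φs (gφs x) x)
    (hsc : Filter.Tendsto (fun x => φ x / ‖x‖) (Filter.cocompact X) Filter.atTop)
    (hinv1 : Function.LeftInverse gφs gφ)
    (hinv2 : Function.RightInverse gφs gφ)
    (h0 : gφ 0 = 0)
    (ω : ℝ → ℝ)
    (hωmono : ∀ s t : ℝ, 0 ≤ s → s ≤ t → ω s ≤ ω t)
    (hωvanish : ∀ t : ℝ, 0 ≤ t → (ω t = 0 ↔ t = 0))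
    (T : X → Set X)
    (hmono : ∀ a b u w : X, u ∈ T a → w ∈ T b → 0 ≤ ⟪u - w, a - b⟫)
    (humono : ∀ a b u w : X, u ∈ T a → w ∈ T b → ω ‖a - b‖ ≤ ⟪u - w, a - b⟫)
    (x v : ℕ → X)
    (hv : ∀ k, v k ∈ T (x (k + 1)))
    (hx : ∀ k, x (k + 1) = x k - gφs (v k)) :
    Summable (fun k => ω ‖x (k + 2) - x (k + 1)‖) ∧
      Summable (fun k => ⟪x (k + 2) - x (k + 1), v (k + 1) - v k⟫) ∧
      (∑' k, ω ‖x (k + 2) - x (k + 1)‖) ≤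
        (∑' k, ⟪x (k + 2) - x (k + 1), v (k + 1) - v k⟫) ∧
      (∑' k, ⟪x (k + 2) - x (k + 1), v (k + 1) - v k⟫) ≤
        φs (v 0) - φs 0 - ⟪gφs 0, v 0 - 0⟫ ∧
      Tendsto (fun k => ‖x (k + 1) - x k‖) atTop (nhds 0) ∧
      Tendsto v atTop (nhds 0) := by
  have hgm : ∀ a b, 0 ≤ ⟪gφ a - gφ b, a - b⟫ := by
    intro a b
    have h1 := tangent_le_of_convexOn hconv.convexOn hgrad a b
    have h2 := tangent_le_of_convexOn hconv.convexOn hgrad b a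
    rw [← neg_sub a b, inner_neg_right] at h2
    rw [inner_sub_left]
    linarith
  have hgsm : ∀ a b, 0 ≤ ⟪gφs a - gφs b, a - b⟫ := by
    intro a b
    have h := hgm (gφs a) (gφs b)
    rwa [hinv2 a, hinv2 b, real_inner_comm] at h
  have hs0 : gφs 0 = 0 := by simpa [h0] using hinv1 0
  have hmin : ∀ a, φs 0 ≤ φs a := fun a => by
    simpa [hs0] using tangent_le_of_monotone_gradient hgrads hgsm a 0
  have hstep : ∀ k, ⟪x (k + 2) - x (k + 1), v (k + 1) - v k⟫ ≤ φs (v k) - φs (v (k + 1)) := by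
    intro k
    have h := tangent_le_of_monotone_gradient hgrads hgsm (v k) (v (k + 1))
    have he : gφs (v (k + 1)) = -(x (k + 2) - x (k + 1)) := by
      rw [hx (k + 1)]; abel
    rw [he, ← neg_sub (v (k + 1)) (v k), inner_neg_neg] at h
    linarith
  have hωle : ∀ k, ω ‖x (k + 2) - x (k + 1)‖ ≤ ⟪x (k + 2) - x (k + 1), v (k + 1) - v k⟫ := by
    intro k
    rw [real_inner_comm]
    exact humono _ _ _ _ (hv (k + 1)) (hv k)
  have hω0 : ω 0 = 0 := (hωvanish 0 le_rfl).2 rfl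
  have hωnn : ∀ t, 0 ≤ t → 0 ≤ ω t := fun t ht => hω0 ▸ hωmono 0 t le_rfl ht
  have hinn : ∀ k, 0 ≤ ⟪x (k + 2) - x (k + 1), v (k + 1) - v k⟫ := fun k =>
    (hωnn _ (norm_nonneg _)).trans (hωle k)
  have hpart : ∀ n, ∑ k ∈ Finset.range n, ⟪x (k + 2) - x (k + 1), v (k + 1) - v k⟫
      ≤ φs (v 0) - φs 0 := by
    intro n
    calc _ ≤ ∑ k ∈ Finset.range n, (φs (v k) - φs (v (k + 1))) :=
          Finset.sum_le_sum fun k _ => hstep k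
      _ = φs (v 0) - φs (v n) := Finset.sum_range_sub' (fun k => φs (v k)) n
      _ ≤ _ := by linarith [hmin (v n)]
  have hsumI := summable_of_sum_range_le hinn hpart
  have hsumω := hsumI.of_nonneg_of_le (fun k => hωnn _ (norm_nonneg _)) hωle
  have hd : Tendsto (fun k => ‖x (k + 1) - x k‖) atTop (𝓝 0) := by
    rw [← tendsto_add_atTop_iff_nat 1, Metric.tendsto_atTop]
    intro ε hε
    have hpos : 0 < ω ε :=
      lt_of_le_of_ne (hωnn ε hε.le) fun h => hε.ne' ((hωvanish ε hε.le).1 h.symm)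
    obtain ⟨N, hN⟩ := eventually_atTop.1 (hsumω.tendsto_atTop_zero.eventually_lt_const hpos)
    refine ⟨N, fun n hn => ?_⟩
    rw [dist_zero_right, norm_norm]
    by_contra! hcon
    exact absurd (hωmono ε _ hε.le hcon) (not_le.2 (hN n hn))
  refine ⟨hsumω, hsumI, hsumω.tsum_le_tsum hωle hsumI, ?_, hd, ?_⟩
  · rw [hs0, inner_zero_left, sub_zero]
    exact Real.tsum_le_of_sum_range_le hinn hpart
  · have hvk : v = fun k => gφ (x k - x (k + 1)) := by
      funext k
      rw [hx k, sub_sub_cancel]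
      exact (hinv2 (v k)).symm
    rw [hvk]
    refine (tendsto_gradient_zero hconv.convexOn hgrad h0).comp ?_
    rw [tendsto_zero_iff_norm_tendsto_zero]
    simpa only [norm_sub_rev] using hd
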